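/- Let X be a random vector in ℝ^d with bounded support, and for a positive semidefinite d×d matrix λ define the observation Y = λ^{1/2} X + W with W ~ N(0, I_d) independent of X. Then the MMSE matrix M(λ) = E[cov(X | Y)] is monotone nonincreasing in λ with respect to the Loewner order: if λ₁ ⪯ λ₂ then M(λ₂) ⪯ M(λ₁). -/

import Mathlib

open Matrix MeasureTheory ProbabilityTheory

/-!
Since `A₁ᵀ A₁ ⪯ A₂ᵀ A₂` says `‖A₁ x‖ ≤ ‖A₂ x‖`, Douglas' factorization gives a contraction `K` with
`A₁ = K A₂`. If `W` is standard Gaussian then so is `K W + Z`, where `Z` is an independent centred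
Gaussian of covariance `1 - K K†`; hence the observation `A₁ X + W` has the same joint law with `X`
as `K (A₂ X + W) + Z`, a randomized function of the better observation. Randomization independent
of `(X, W)` cannot help the estimator: for each fixed value of `Z` the mean squared error is at
least the expected conditional variance given `A₂ X + W`. Applied to every functional `v ⬝ᵥ X`,
this is the Loewner inequality.
-/

section ConditionalVariance

variable {Ω : Type*} {m mΩ : MeasurableSpace Ω} {μ : Measure Ω} {f h : Ω → ℝ}

lemma integral_condVar_eq_integral_sub_condExp_sq (hm : m ≤ mΩ) [SigmaFinite (μ.trim hm)] :
    ∫ ω, Var[f; μ | m] ω ∂μ = ∫ ω, (f ω - (μ[f | m]) ω) ^ 2 ∂μ :=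
  integral_condExp hm

lemma condVar_sub_of_stronglyMeasurable (hm : m ≤ mΩ) [SigmaFinite (μ.trim hm)]
    (hf : Integrable f μ) (hh : Integrable h μ) (hhm : StronglyMeasurable[m] h) :
    Var[f - h; μ | m] =ᵐ[μ] Var[f; μ | m] := by
  refine condExp_congr_ae ?_
  filter_upwards [condExp_sub hf hh m] with ω hω
  simp only [Pi.pow_apply, Pi.sub_apply, hω, condExp_of_stronglyMeasurable hm hhm hh,
    sub_sub_sub_cancel_right]

lemma integral_condVar_le_integral_sub_sq [IsFiniteMeasure μ] (hm : m ≤ mΩ) (hf : MemLp f 2 μ)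
    (hh : MemLp h 2 μ) (hhm : StronglyMeasurable[m] h) :
    ∫ ω, Var[f; μ | m] ω ∂μ ≤ ∫ ω, (f ω - h ω) ^ 2 ∂μ := calc
  ∫ ω, Var[f; μ | m] ω ∂μ = ∫ ω, Var[f - h; μ | m] ω ∂μ :=
    integral_congr_ae (condVar_sub_of_stronglyMeasurable hm (hf.integrable one_le_two)
      (hh.integrable one_le_two) hhm).symm
  _ ≤ ∫ ω, (μ[(f - h) ^ 2 | m]) ω ∂μ :=
    integral_mono_ae integrable_condVar integrable_condExp (condVar_ae_le_condExp_sq hm (hf.sub hh))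
  _ = ∫ ω, (f ω - h ω) ^ 2 ∂μ := integral_condExp hm

variable {E F F₁ Z : Type*} [MeasurableSpace E] [MeasurableSpace F] [MeasurableSpace F₁]
  [MeasurableSpace Z] {ν : Measure Z} [IsProbabilityMeasure ν]

lemma integral_condVar_le_integral_prod_sub_sq [IsFiniteMeasure μ] {Y : Ω → F} (hY : Measurable Y)
    (hf : MemLp f 2 μ) {h : F × Z → ℝ} (hh : Measurable h)
    (hint : Integrable (fun p : Ω × Z => (f p.1 - h (Y p.1, p.2)) ^ 2) (μ.prod ν)) :
    ∫ ω, Var[f; μ | MeasurableSpace.comap Y inferInstance] ω ∂μ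
      ≤ ∫ p : Ω × Z, (f p.1 - h (Y p.1, p.2)) ^ 2 ∂μ.prod ν := by
  set c := ∫ ω, Var[f; μ | MeasurableSpace.comap Y inferInstance] ω ∂μ
  have error_le : ∀ᵐ z ∂ν, c ≤ ∫ ω, (f ω - h (Y ω, z)) ^ 2 ∂μ := by
    filter_upwards [hint.prod_left_ae] with z hz
    have hhz : Measurable fun y => h (y, z) := by fun_prop
    have residual_memLp : MemLp (fun ω => f ω - h (Y ω, z)) 2 μ :=
      (memLp_two_iff_integrable_sq (hf.1.sub (hhz.comp hY).aestronglyMeasurable)).2 hz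
    have estimator_memLp : MemLp (fun ω => h (Y ω, z)) 2 μ := by
      simpa only [Pi.sub_def, sub_sub_cancel] using hf.sub residual_memLp
    exact integral_condVar_le_integral_sub_sq hY.comap_le hf estimator_memLp
      (hhz.comp (comap_measurable Y)).stronglyMeasurable
  calc c = ∫ _ : Z, c ∂ν := by simp
    _ ≤ ∫ z, ∫ ω, (f ω - h (Y ω, z)) ^ 2 ∂μ ∂ν :=
      integral_mono_ae (integrable_const c) hint.integral_prod_right error_le
    _ = ∫ p : Ω × Z, (f p.1 - h (Y p.1, p.2)) ^ 2 ∂μ.prod ν := (integral_prod_symm _ hint).symm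

lemma integral_condVar_le_of_map_eq [IsFiniteMeasure μ] {X : Ω → E} {Y₁ : Ω → F₁} {Y₂ : Ω → F}
    {G : F × Z → F₁} {φ : E → ℝ} (hX : Measurable X) (hY₁ : Measurable Y₁) (hY₂ : Measurable Y₂)
    (hG : Measurable G) (hφ : Measurable φ) (hφX : MemLp (φ ∘ X) 2 μ)
    (hlaw : μ.map (fun ω => (X ω, Y₁ ω)) = (μ.prod ν).map (fun p => (X p.1, G (Y₂ p.1, p.2)))) :
    ∫ ω, Var[φ ∘ X; μ | MeasurableSpace.comap Y₂ inferInstance] ω ∂μ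
      ≤ ∫ ω, Var[φ ∘ X; μ | MeasurableSpace.comap Y₁ inferInstance] ω ∂μ := by
  obtain ⟨g, hg, hgY⟩ := (stronglyMeasurable_condExp (μ := μ) (f := φ ∘ X)
    (m := MeasurableSpace.comap Y₁ inferInstance)).measurable.exists_eq_measurable_comp
  set error : E × F₁ → ℝ := fun p => (φ p.1 - g p.2) ^ 2
  have herror : Measurable error := by fun_prop
  have hXY₁ : AEMeasurable (fun ω => (X ω, Y₁ ω)) μ := by fun_prop
  have hXGY₂ : AEMeasurable (fun p : Ω × Z => (X p.1, G (Y₂ p.1, p.2))) (μ.prod ν) := by fun_prop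
  have integrable_error : Integrable error (μ.map fun ω => (X ω, Y₁ ω)) := by
    refine (integrable_map_measure herror.aestronglyMeasurable hXY₁).2 ?_
    have := (hφX.sub (hφX.condExp (m := MeasurableSpace.comap Y₁ inferInstance)
      one_le_two)).integrable_sq
    rwa [hgY] at this
  rw [integral_condVar_eq_integral_sub_condExp_sq hY₁.comap_le, hgY]
  calc ∫ ω, Var[φ ∘ X; μ | MeasurableSpace.comap Y₂ inferInstance] ω ∂μ
      ≤ ∫ p : Ω × Z, error (X p.1, G (Y₂ p.1, p.2)) ∂μ.prod ν :=
        integral_condVar_le_integral_prod_sub_sq hY₂ hφX (h := g ∘ G) (hg.comp hG)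
          ((integrable_map_measure herror.aestronglyMeasurable hXGY₂).1 (hlaw ▸ integrable_error))
    _ = ∫ ω, error (X ω, Y₁ ω) ∂μ := by
      rw [← integral_map hXGY₂ herror.aestronglyMeasurable, ← hlaw,
        integral_map hXY₁ herror.aestronglyMeasurable]

end ConditionalVariance

section DouglasFactorization

variable {𝕜 E F G : Type*} [RCLike 𝕜] [AddCommGroup E] [Module 𝕜 E] [NormedAddCommGroup F]
  [InnerProductSpace 𝕜 F] [NormedAddCommGroup G] [NormedSpace 𝕜 G]

lemma exists_contraction_comp_eq_of_norm_le (A : E →ₗ[𝕜] G) (B : E →ₗ[𝕜] F)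
    [B.range.HasOrthogonalProjection] (hAB : ∀ x, ‖A x‖ ≤ ‖B x‖) :
    ∃ K : F →L[𝕜] G, ‖K‖ ≤ 1 ∧ ∀ x, K (B x) = A x := by
  obtain ⟨r, hr⟩ := B.rangeRestrict.exists_rightInverse_of_surjective B.range_rangeRestrict
  have hBr (y : B.range) : B (r y) = y := congrArg Subtype.val (LinearMap.congr_fun hr y)
  have norm_A_r_le (y : B.range) : ‖A (r y)‖ ≤ ‖y‖ := (hAB (r y)).trans_eq (by rw [hBr]; rfl)
  refine ⟨(A ∘ₗ r ∘ₗ B.range.orthogonalProjectionOnto.toLinearMap).mkContinuous 1 fun y => ?_,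
    LinearMap.mkContinuous_norm_le _ zero_le_one _, fun x => ?_⟩
  · rw [one_mul]
    exact (norm_A_r_le _).trans (B.range.norm_orthogonalProjectionOnto_apply_le y)
  · have projection_eq : B.range.orthogonalProjectionOnto (B x) = B.rangeRestrict x :=
      B.range.orthogonalProjectionOnto_mem_subspace_eq_self (B.rangeRestrict x)
    have : ‖A (r (B.rangeRestrict x) - x)‖ ≤ 0 := by
      refine (hAB _).trans_eq ?_
      rw [map_sub, hBr, LinearMap.codRestrict_apply, sub_self, norm_zero]
    rw [norm_le_zero_iff, map_sub, sub_eq_zero] at this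
    simpa [projection_eq] using this

end DouglasFactorization

section AdjointDefect

variable {𝕜 F G : Type*} [RCLike 𝕜] [NormedAddCommGroup F] [InnerProductSpace 𝕜 F]
  [NormedAddCommGroup G] [InnerProductSpace 𝕜 G]

lemma exists_norm_sq_eq_reApplyInnerSelf [FiniteDimensional 𝕜 G] {T : G →L[𝕜] G}
    (hT : T.IsPositive) :
    ∃ (n : ℕ) (U : G →L[𝕜] EuclideanSpace 𝕜 (Fin n)), ∀ t, ‖U t‖ ^ 2 = T.reApplyInnerSelf t := by
  obtain ⟨n, u, hu⟩ := ContinuousLinearMap.isPositive_iff_eq_sum_rankOne.1 hT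
  refine ⟨n, ((EuclideanSpace.equiv (Fin n) 𝕜).symm : _ →L[𝕜] _) ∘L
    ContinuousLinearMap.pi fun i => innerSL 𝕜 (u i), fun t => ?_⟩
  simp [EuclideanSpace.norm_sq_eq, ContinuousLinearMap.reApplyInnerSelf_apply, hu, sum_inner,
    inner_smul_left, inner_mul_symm_re_eq_norm, norm_inner_symm t, ← sq, -RCLike.mul_re]

variable [CompleteSpace F] [CompleteSpace G]

lemma reApplyInnerSelf_one_sub_comp_adjoint (K : F →L[𝕜] G) (t : G) :
    (1 - K ∘L K.adjoint).reApplyInnerSelf t = ‖t‖ ^ 2 - ‖K.adjoint t‖ ^ 2 := by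
  rw [ContinuousLinearMap.reApplyInnerSelf_apply, _root_.sub_apply, inner_sub_left,
    one_apply_eq_self, ContinuousLinearMap.comp_apply, ← ContinuousLinearMap.adjoint_inner_right,
    map_sub, inner_self_eq_norm_sq, inner_self_eq_norm_sq]

lemma isPositive_one_sub_comp_adjoint {K : F →L[𝕜] G} (hK : ‖K‖ ≤ 1) :
    (1 - K ∘L K.adjoint).IsPositive := by
  refine ContinuousLinearMap.isPositive_def'.2 ⟨(IsSelfAdjoint.one _).sub
    (ContinuousLinearMap.isPositive_self_comp_adjoint K).isSelfAdjoint, fun t => ?_⟩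
  have norm_adjoint_apply_le : ‖K.adjoint t‖ ≤ ‖t‖ :=
    (K.adjoint.le_of_opNorm_le (by simpa using hK) t).trans_eq (one_mul _)
  rw [reApplyInnerSelf_one_sub_comp_adjoint, sub_nonneg]
  gcongr

end AdjointDefect

section GaussianMixing

variable {F G : Type*} [NormedAddCommGroup F] [InnerProductSpace ℝ F] [FiniteDimensional ℝ F]
  [MeasurableSpace F] [BorelSpace F] [NormedAddCommGroup G] [InnerProductSpace ℝ G]
  [FiniteDimensional ℝ G] [MeasurableSpace G] [BorelSpace G]

lemma charFun_map_stdGaussian (K : F →L[ℝ] G) (t : G) :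
    charFun ((stdGaussian F).map K) t = Complex.exp (-‖K.adjoint t‖ ^ 2 / 2) := by
  have toDual_comp : (InnerProductSpace.toDualMap ℝ G t).comp K =
      InnerProductSpace.toDualMap ℝ F (K.adjoint t) := by
    ext x; simp [ContinuousLinearMap.adjoint_inner_left]
  rw [charFun_eq_charFunDual_toDualMap, charFunDual_map, toDual_comp,
    ← charFun_eq_charFunDual_toDualMap, charFun_stdGaussian]

lemma exists_charFun_eq_exp_reApplyInnerSelf {T : G →L[ℝ] G} (hT : T.IsPositive) :
    ∃ ν : Measure G, IsProbabilityMeasure ν ∧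
      ∀ t, charFun ν t = Complex.exp (-T.reApplyInnerSelf t / 2) := by
  obtain ⟨n, U, hU⟩ := exists_norm_sq_eq_reApplyInnerSelf hT
  refine ⟨(stdGaussian _).map U.adjoint, Measure.isProbabilityMeasure_map (by fun_prop),
    fun t => ?_⟩
  rw [charFun_map_stdGaussian, ContinuousLinearMap.adjoint_adjoint, ← hU, Complex.ofReal_pow]

lemma exists_map_conv_eq_stdGaussian {K : F →L[ℝ] G} (hK : ‖K‖ ≤ 1) :
    ∃ ν : Measure G, IsProbabilityMeasure ν ∧ (stdGaussian F).map K ∗ ν = stdGaussian G := by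
  obtain ⟨ν, hν, hcharFun⟩ :=
    exists_charFun_eq_exp_reApplyInnerSelf (isPositive_one_sub_comp_adjoint hK)
  have := Measure.isProbabilityMeasure_map (μ := stdGaussian F) (f := K) (by fun_prop)
  refine ⟨ν, hν, Measure.ext_of_charFun (funext fun t => ?_)⟩
  rw [charFun_conv, charFun_map_stdGaussian, hcharFun, charFun_stdGaussian, ← Complex.exp_add,
    reApplyInnerSelf_one_sub_comp_adjoint]
  push_cast
  ring_nf

end GaussianMixing

section ChannelDegradation

variable {Ω E F G : Type*} [MeasurableSpace Ω] {μ : Measure Ω} [IsFiniteMeasure μ]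
  [MeasurableSpace E]

lemma map_prodMk_add_eq_prod_conv [AddMonoid G] [MeasurableSpace G] [MeasurableAdd₂ G]
    {ν : Measure G} [SFinite ν] {X : Ω → E} {V : Ω → G} (hX : Measurable X) (hV : Measurable V)
    (hXV : IndepFun X V μ) :
    (μ.prod ν).map (fun p => (X p.1, V p.1 + p.2)) = (μ.map X).prod (μ.map V ∗ ν) := calc
  (μ.prod ν).map (fun p => (X p.1, V p.1 + p.2))
      = (((μ.map fun ω => (X ω, V ω)).prod (ν.map id)).map MeasurableEquiv.prodAssoc).map
          (Prod.map id fun q : G × G => q.1 + q.2) := by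
        rw [Measure.map_prod_map _ _ (by fun_prop) measurable_id,
          Measure.map_map (by fun_prop) (by fun_prop), Measure.map_map (by fun_prop) (by fun_prop)]
        rfl
  _ = (μ.map X).prod (μ.map V ∗ ν) := by
        rw [hXV.map_prod_eq_prod_map_map hX.aemeasurable hV.aemeasurable, Measure.map_id,
          Measure.prodAssoc_prod, ← Measure.map_prod_map _ _ measurable_id (by fun_prop),
          Measure.map_id]
        rfl

variable [NormedAddCommGroup F] [InnerProductSpace ℝ F] [FiniteDimensional ℝ F]
  [MeasurableSpace F] [BorelSpace F] [NormedAddCommGroup G] [InnerProductSpace ℝ G]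
  [FiniteDimensional ℝ G] [MeasurableSpace G] [BorelSpace G]
  {X : Ω → E} {W₁ : Ω → G} {W₂ : Ω → F}

lemma exists_map_prodMk_gaussianChannel_eq (hX : Measurable X) (hW₁ : Measurable W₁)
    (hW₂ : Measurable W₂) (hXW₁ : IndepFun X W₁ μ) (hXW₂ : IndepFun X W₂ μ)
    (hW₁law : μ.map W₁ = stdGaussian G) (hW₂law : μ.map W₂ = stdGaussian F)
    {A : E → F} (hA : Measurable A) {K : F →L[ℝ] G} (hK : ‖K‖ ≤ 1) :
    ∃ ν : Measure G, IsProbabilityMeasure ν ∧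
      μ.map (fun ω => (X ω, K (A (X ω)) + W₁ ω)) =
        (μ.prod ν).map (fun p => (X p.1, K (A (X p.1) + W₂ p.1) + p.2)) := by
  obtain ⟨ν, hν, hmix⟩ := exists_map_conv_eq_stdGaussian hK
  refine ⟨ν, hν, ?_⟩
  have law_pair : μ.map (fun ω => (X ω, W₁ ω)) =
      (μ.prod ν).map (fun p => (X p.1, K (W₂ p.1) + p.2)) := by
    rw [map_prodMk_add_eq_prod_conv (V := fun ω => K (W₂ ω)) hX (by fun_prop)
        (hXW₂.comp measurable_id K.measurable),
      hXW₁.map_prod_eq_prod_map_map hX.aemeasurable hW₁.aemeasurable, hW₁law, ← hmix, ← hW₂law,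
      Measure.map_map (by fun_prop) hW₂]
    rfl
  have hshear : Measurable fun q : E × G => (q.1, K (A q.1) + q.2) := by fun_prop
  have := congrArg (Measure.map fun q : E × G => (q.1, K (A q.1) + q.2)) law_pair
  rw [Measure.map_map hshear (by fun_prop), Measure.map_map hshear (by fun_prop)] at this
  simpa only [Function.comp_def, map_add, add_assoc] using this

lemma integral_condVar_gaussianChannel_le [AddCommGroup E] [Module ℝ E] (hX : Measurable X)
    (hW₁ : Measurable W₁) (hW₂ : Measurable W₂) (hXW₁ : IndepFun X W₁ μ) (hXW₂ : IndepFun X W₂ μ)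
    (hW₁law : μ.map W₁ = stdGaussian G) (hW₂law : μ.map W₂ = stdGaussian F)
    {A₁ : E →ₗ[ℝ] G} {A₂ : E →ₗ[ℝ] F} (hA₁ : Measurable A₁) (hA₂ : Measurable A₂)
    (hA : ∀ x, ‖A₁ x‖ ≤ ‖A₂ x‖) {φ : E → ℝ} (hφ : Measurable φ) (hφX : MemLp (φ ∘ X) 2 μ) :
    ∫ ω, Var[φ ∘ X; μ | .comap (fun ω => A₂ (X ω) + W₂ ω) inferInstance] ω ∂μ ≤
      ∫ ω, Var[φ ∘ X; μ | .comap (fun ω => A₁ (X ω) + W₁ ω) inferInstance] ω ∂μ := by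
  obtain ⟨K, hK, hKA⟩ := exists_contraction_comp_eq_of_norm_le A₁ A₂ hA
  obtain ⟨ν, hν, hlaw⟩ :=
    exists_map_prodMk_gaussianChannel_eq hX hW₁ hW₂ hXW₁ hXW₂ hW₁law hW₂law hA₂ hK
  simp only [hKA] at hlaw
  exact integral_condVar_le_of_map_eq (G := fun q : F × G => K q.1 + q.2) hX (by fun_prop)
    (by fun_prop) (by fun_prop) hφ hφX hlaw

end ChannelDegradation

section MMSEMatrix

variable {Ω ι : Type*} {m m₁ m₂ mΩ : MeasurableSpace Ω} {μ : Measure Ω} {X : Ω → ι → ℝ}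

/-- The MMSE matrix `E[cov(X | m)]` of estimating `X` from the information `m`. By the tower
property it is encoded without the conditional covariance, as the second moment matrix of the
residual `X - E[X | m]`. -/
noncomputable def mmseMatrix (μ : Measure[mΩ] Ω) (X : Ω → ι → ℝ) (m : MeasurableSpace Ω) :
    Matrix ι ι ℝ :=
  .of fun i j => ∫ ω, (X ω i - (μ[fun ω' => X ω' i | m]) ω) *
    (X ω j - (μ[fun ω' => X ω' j | m]) ω) ∂μ

lemma isHermitian_mmseMatrix : (mmseMatrix μ X m).IsHermitian :=
  IsHermitian.ext fun i j => by simp only [mmseMatrix, of_apply, star_trivial, mul_comm]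

variable [Fintype ι]

lemma condExp_dotProduct (hX : ∀ i, Integrable (fun ω => X ω i) μ) (v : ι → ℝ) :
    μ[fun ω => v ⬝ᵥ X ω | m] =ᵐ[μ] fun ω => v ⬝ᵥ fun i => (μ[fun ω' => X ω' i | m]) ω := by
  have sum_eq : (fun ω => v ⬝ᵥ X ω) = ∑ i, v i • fun ω => X ω i := by
    ext ω; simp [dotProduct]
  have condExp_smul_eq : ∀ᵐ ω ∂μ, ∀ i,
      (μ[v i • fun ω' => X ω' i | m]) ω = v i * (μ[fun ω' => X ω' i | m]) ω :=
    ae_all_iff.2 fun i => condExp_smul (v i) _ m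
  rw [sum_eq]
  filter_upwards [condExp_finsetSum (s := .univ) (fun i _ => (hX i).smul (v i)) m,
    condExp_smul_eq] with ω h₁ h₂
  simp only [h₁, Finset.sum_apply, h₂, dotProduct]

lemma integral_dotProduct_sq {R : Ω → ι → ℝ} (hR : ∀ i, MemLp (fun ω => R ω i) 2 μ) (v : ι → ℝ) :
    ∫ ω, (v ⬝ᵥ R ω) ^ 2 ∂μ = v ⬝ᵥ (Matrix.of fun i j => ∫ ω, R ω i * R ω j ∂μ) *ᵥ v := by
  have integrable_mul (i j : ι) : Integrable (fun ω => R ω i * R ω j) μ :=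
    (hR i).integrable_mul (hR j)
  have sq_eq (ω : Ω) : (v ⬝ᵥ R ω) ^ 2 = ∑ i, ∑ j, v i * v j * (R ω i * R ω j) := by
    simp only [dotProduct, sq, Finset.sum_mul_sum, mul_mul_mul_comm]
  simp_rw [sq_eq]
  rw [integral_finsetSum _ fun i _ => integrable_finsetSum _ fun j _ =>
    (integrable_mul i j).const_mul _]
  simp_rw [integral_finsetSum _ fun j _ => (integrable_mul _ j).const_mul _, integral_const_mul,
    dotProduct, mulVec, dotProduct, Finset.mul_sum, of_apply, mul_assoc, mul_comm (v _) (∫ _, _ ∂_)]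

lemma dotProduct_mmseMatrix_mulVec [IsFiniteMeasure μ] (hm : m ≤ mΩ)
    (hX : ∀ i, MemLp (fun ω => X ω i) 2 μ) (v : ι → ℝ) :
    v ⬝ᵥ mmseMatrix μ X m *ᵥ v = ∫ ω, Var[fun ω => v ⬝ᵥ X ω; μ | m] ω ∂μ := by
  rw [integral_condVar_eq_integral_sub_condExp_sq hm, mmseMatrix, ← integral_dotProduct_sq
    (R := fun ω i => X ω i - (μ[fun ω' => X ω' i | m]) ω)
    fun i => (hX i).sub ((hX i).condExp one_le_two)]
  refine integral_congr_ae ?_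
  filter_upwards [condExp_dotProduct (m := m) (fun i => (hX i).integrable one_le_two) v] with ω hω
  rw [hω, ← dotProduct_sub]
  rfl

lemma posSemidef_mmseMatrix_sub [IsFiniteMeasure μ] (hm₁ : m₁ ≤ mΩ) (hm₂ : m₂ ≤ mΩ)
    (hX : ∀ i, MemLp (fun ω => X ω i) 2 μ)
    (hVar : ∀ v : ι → ℝ, ∫ ω, Var[fun ω => v ⬝ᵥ X ω; μ | m₂] ω ∂μ ≤
      ∫ ω, Var[fun ω => v ⬝ᵥ X ω; μ | m₁] ω ∂μ) :
    (mmseMatrix μ X m₁ - mmseMatrix μ X m₂).PosSemidef := by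
  refine .of_dotProduct_mulVec_nonneg (isHermitian_mmseMatrix.sub isHermitian_mmseMatrix)
    fun v => ?_
  rw [star_trivial, sub_mulVec, dotProduct_sub, sub_nonneg, dotProduct_mmseMatrix_mulVec hm₁ hX,
    dotProduct_mmseMatrix_mulVec hm₂ hX]
  exact hVar v

end MMSEMatrix

section EuclideanCoordinates

variable {Ω ι κ κ₁ κ₂ : Type*} [Fintype ι]

lemma comap_measurableEmbedding_comp {α β : Type*} [MeasurableSpace α] [MeasurableSpace β]
    {g : α → β} (hg : MeasurableEmbedding g) (Y : Ω → α) :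
    MeasurableSpace.comap (g ∘ Y) inferInstance = MeasurableSpace.comap Y inferInstance := by
  rw [← MeasurableSpace.comap_comp]
  exact congrArg (MeasurableSpace.comap Y) hg.comap_eq

lemma measurable_mulVec (A : Matrix κ ι ℝ) : Measurable (A *ᵥ ·) := by
  unfold mulVec dotProduct
  fun_prop

/-- The linear map `x ↦ A x` into Euclidean space, so that its values carry the `ℓ²` norm. -/
noncomputable def mulVecEuclidean (A : Matrix κ ι ℝ) : (ι → ℝ) →ₗ[ℝ] EuclideanSpace ℝ κ :=
  (WithLp.linearEquiv 2 ℝ (κ → ℝ)).symm ∘ₗ A.mulVecLin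

lemma measurable_mulVecEuclidean (A : Matrix κ ι ℝ) : Measurable (mulVecEuclidean A) :=
  (WithLp.measurable_toLp 2 _).comp (measurable_mulVec A)

lemma comap_mulVecEuclidean_add (A : Matrix κ ι ℝ) (X : Ω → ι → ℝ) (W : Ω → κ → ℝ) :
    MeasurableSpace.comap (fun ω => mulVecEuclidean A (X ω) + WithLp.toLp 2 (W ω)) inferInstance =
      MeasurableSpace.comap (fun ω => A *ᵥ X ω + W ω) inferInstance :=
  comap_measurableEmbedding_comp (MeasurableEquiv.toLp 2 (κ → ℝ)).measurableEmbedding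
    fun ω => A *ᵥ X ω + W ω

lemma norm_mulVecEuclidean_sq [Fintype κ] (A : Matrix κ ι ℝ) (x : ι → ℝ) :
    ‖mulVecEuclidean A x‖ ^ 2 = x ⬝ᵥ (Aᵀ * A) *ᵥ x := by
  rw [EuclideanSpace.real_norm_sq_eq, ← mulVec_mulVec, dotProduct_mulVec, vecMul_transpose]
  exact Finset.sum_congr rfl fun k _ => sq _

lemma norm_mulVecEuclidean_le_of_posSemidef_sub [Fintype κ₁] [Fintype κ₂]
    {A₁ : Matrix κ₁ ι ℝ} {A₂ : Matrix κ₂ ι ℝ} (hA : (A₂ᵀ * A₂ - A₁ᵀ * A₁).PosSemidef) (x : ι → ℝ) :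
    ‖mulVecEuclidean A₁ x‖ ≤ ‖mulVecEuclidean A₂ x‖ := by
  have := hA.dotProduct_mulVec_nonneg x
  rw [star_trivial, sub_mulVec, dotProduct_sub, sub_nonneg, ← norm_mulVecEuclidean_sq,
    ← norm_mulVecEuclidean_sq] at this
  exact le_of_sq_le_sq this (norm_nonneg _)

lemma map_toLp_comp_eq_stdGaussian [Fintype κ] [MeasurableSpace Ω] {μ : Measure Ω}
    {W : Ω → κ → ℝ} (hW : Measurable W) (hWlaw : μ.map W = .pi fun _ => gaussianReal 0 1) :
    μ.map (fun ω => WithLp.toLp 2 (W ω)) = stdGaussian (EuclideanSpace ℝ κ) := by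
  rw [← map_pi_eq_stdGaussian, ← hWlaw, Measure.map_map (by fun_prop) hW, Function.comp_def]

lemma integral_condVar_mulVec_add_le [Fintype κ₁] [Fintype κ₂] [MeasurableSpace Ω] {μ : Measure Ω}
    [IsFiniteMeasure μ] {X : Ω → ι → ℝ} {W₁ : Ω → κ₁ → ℝ} {W₂ : Ω → κ₂ → ℝ}
    (hX : Measurable X) (hW₁ : Measurable W₁) (hW₂ : Measurable W₂) (hXW₁ : IndepFun X W₁ μ)
    (hXW₂ : IndepFun X W₂ μ) (hW₁law : μ.map W₁ = .pi fun _ => gaussianReal 0 1)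
    (hW₂law : μ.map W₂ = .pi fun _ => gaussianReal 0 1)
    {A₁ : Matrix κ₁ ι ℝ} {A₂ : Matrix κ₂ ι ℝ} (hA : (A₂ᵀ * A₂ - A₁ᵀ * A₁).PosSemidef)
    {φ : (ι → ℝ) → ℝ} (hφ : Measurable φ) (hφX : MemLp (φ ∘ X) 2 μ) :
    ∫ ω, Var[φ ∘ X; μ | .comap (fun ω => A₂ *ᵥ X ω + W₂ ω) inferInstance] ω ∂μ ≤
      ∫ ω, Var[φ ∘ X; μ | .comap (fun ω => A₁ *ᵥ X ω + W₁ ω) inferInstance] ω ∂μ := by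
  rw [← comap_mulVecEuclidean_add, ← comap_mulVecEuclidean_add]
  exact integral_condVar_gaussianChannel_le hX (by fun_prop) (by fun_prop)
    (hXW₁.comp measurable_id (by fun_prop)) (hXW₂.comp measurable_id (by fun_prop))
    (map_toLp_comp_eq_stdGaussian hW₁ hW₁law) (map_toLp_comp_eq_stdGaussian hW₂ hW₂law)
    (measurable_mulVecEuclidean A₁) (measurable_mulVecEuclidean A₂)
    (norm_mulVecEuclidean_le_of_posSemidef_sub hA) hφ hφX

end EuclideanCoordinates

theorem stmt_8_general {Ω ι κ₁ κ₂ : Type*} [Fintype ι] [Fintype κ₁] [Fintype κ₂]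
    [MeasurableSpace Ω] {μ : Measure Ω} [IsFiniteMeasure μ]
    {X : Ω → ι → ℝ} {W₁ : Ω → κ₁ → ℝ} {W₂ : Ω → κ₂ → ℝ} (hX : Measurable X)
    (hW₁ : Measurable W₁) (hW₂ : Measurable W₂) (hXL2 : ∀ i, MemLp (fun ω => X ω i) 2 μ)
    (hXW₁ : IndepFun X W₁ μ) (hXW₂ : IndepFun X W₂ μ)
    (hW₁law : μ.map W₁ = .pi fun _ => gaussianReal 0 1)
    (hW₂law : μ.map W₂ = .pi fun _ => gaussianReal 0 1)
    {A₁ : Matrix κ₁ ι ℝ} {A₂ : Matrix κ₂ ι ℝ} (hA : (A₂ᵀ * A₂ - A₁ᵀ * A₁).PosSemidef) :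
    (mmseMatrix μ X (.comap (fun ω => A₁ *ᵥ X ω + W₁ ω) inferInstance) -
      mmseMatrix μ X (.comap (fun ω => A₂ *ᵥ X ω + W₂ ω) inferInstance)).PosSemidef :=
  posSemidef_mmseMatrix_sub (((measurable_mulVec A₁).comp hX).add hW₁).comap_le
    (((measurable_mulVec A₂).comp hX).add hW₂).comap_le hXL2 fun v =>
    integral_condVar_mulVec_add_le hX hW₁ hW₂ hXW₁ hXW₂ hW₁law hW₂law hA (φ := (v ⬝ᵥ ·))
      (by unfold dotProduct; fun_prop) (memLp_finsetSum _ fun i _ => (hXL2 i).const_mul (v i))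

/-- the MMSE matrix `M(λ) = E[cov(X | λ^{1/2} X + W)]` of a bounded signal
`X` observed through Gaussian noise `W ~ N(0, I_d)` is nonincreasing in the
signal-to-noise matrix `λ` w.r.t. the Loewner order: `λ₁ ⪯ λ₂` implies `M(λ₂) ⪯ M(λ₁)`.
The PSD square roots `s₁, s₂` of `λ₁, λ₂` are given as hypotheses, and the MMSE matrices
are specified entrywise via conditional expectations given `σ(Y)`. -/
theorem stmt_8 {Ω : Type*} [MeasurableSpace Ω] (μ : Measure Ω) [IsProbabilityMeasure μ]
    (d : ℕ) (X W : Ω → (Fin d → ℝ)) (hX : Measurable X) (hW : Measurable W)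
    (hXbdd : ∃ C : ℝ, ∀ ω, ‖X ω‖ ≤ C)
    (hindep : IndepFun X W μ)
    (hWlaw : Measure.map W μ = Measure.pi fun _ : Fin d => gaussianReal 0 1)
    (lam₁ lam₂ : Matrix (Fin d) (Fin d) ℝ)
    (hlam₁ : lam₁.PosSemidef) (hlam₂ : lam₂.PosSemidef)
    (hle : (lam₂ - lam₁).PosSemidef)
    (s₁ s₂ : Matrix (Fin d) (Fin d) ℝ)
    (hs₁ : s₁.PosSemidef) (hs₁sq : s₁ * s₁ = lam₁)
    (hs₂ : s₂.PosSemidef) (hs₂sq : s₂ * s₂ = lam₂)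
    (M₁ M₂ : Matrix (Fin d) (Fin d) ℝ)
    (hM₁ : ∀ i j, M₁ i j =
      ∫ ω, (X ω i - (μ[fun ω' => X ω' i |
            MeasurableSpace.comap (fun ω' => s₁.mulVec (X ω') + W ω') inferInstance]) ω)
        * (X ω j - (μ[fun ω' => X ω' j |
            MeasurableSpace.comap (fun ω' => s₁.mulVec (X ω') + W ω') inferInstance]) ω) ∂μ)
    (hM₂ : ∀ i j, M₂ i j =
      ∫ ω, (X ω i - (μ[fun ω' => X ω' i |
            MeasurableSpace.comap (fun ω' => s₂.mulVec (X ω') + W ω') inferInstance]) ω)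
        * (X ω j - (μ[fun ω' => X ω' j |
            MeasurableSpace.comap (fun ω' => s₂.mulVec (X ω') + W ω') inferInstance]) ω) ∂μ) :
    (M₁ - M₂).PosSemidef := by
  obtain ⟨C, hC⟩ := hXbdd
  have hXL2 (i : Fin d) : MemLp (fun ω => X ω i) 2 μ :=
    .of_bound (by fun_prop) C (.of_forall fun ω => (norm_le_pi_norm (X ω) i).trans (hC ω))
  have gram_le : (s₂ᵀ * s₂ - s₁ᵀ * s₁).PosSemidef := by
    rwa [← conjTranspose_eq_transpose_of_trivial, ← conjTranspose_eq_transpose_of_trivial,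
      hs₁.1.eq, hs₂.1.eq, hs₁sq, hs₂sq]
  rw [show M₁ = mmseMatrix μ X _ from Matrix.ext hM₁,
    show M₂ = mmseMatrix μ X _ from Matrix.ext hM₂]
  exact stmt_8_general hX hW hW hXL2 hindep hindep hWlaw hWlaw gram_le
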